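/- Completeness of the syntax-directed λ_SEC type system with respect to Zdancewic's declarative system: for every ascription-free λ_SEC term t, every typing context Γ and every static security type S, if Γ ⊢^Z t : S in Zdancewic's system then there exists a static security type S' with S' <: S such that Γ ⊢ t : S' in the syntax-directed system. -/

import Mathlib

/-!
The proof is by induction on the declarative derivation. Subsumption is absorbed by transitivity of
subtyping, and application by transitivity together with monotonicity of stamping. The one step
with content is the conditional: the two branches have syntax-directed types below the common type
`S ⊔ ℓ`, and two types with a common upper bound have a join `⋎` which lies below that
bound (`sjoin_of_upper`). By contravariance this has to be proved simultaneously with the dual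
fact about `⋏` and common lower bounds. Stamping that join with a label below `ℓ` stays
under `S ⊔ ℓ`, since the outermost label of `S ⊔ ℓ` already dominates `ℓ`.
-/

/-- Static security types: S ::= Bool_ℓ | S →_ℓ S. -/
inductive SType (L : Type) where
  | bool (l : L)
  | arrow (S1 : SType L) (l : L) (S2 : SType L)

variable {L : Type} [Lattice L] [BoundedOrder L]

/-- Static subtyping. -/
inductive SSub : SType L → SType L → Prop where
  | bool {l l' : L} : l ≤ l' → SSub (.bool l) (.bool l')
  | arrow {S1 S1' S2 S2' : SType L} {l l' : L} :
      SSub S1' S1 → SSub S2 S2' → l ≤ l' →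
      SSub (.arrow S1 l S2) (.arrow S1' l' S2')

/-- Label stamping on static types. -/
def SType.stamp : SType L → L → SType L
  | .bool l, l' => .bool (l ⊔ l')
  | .arrow S1 l S2, l' => .arrow S1 (l ⊔ l') S2

mutual
/-- Partial subtyping join ⋎. -/
def sjoin : SType L → SType L → Option (SType L)
  | .bool l, .bool l' => some (.bool (l ⊔ l'))
  | .arrow S11 l S12, .arrow S21 l' S22 => do
      let m ← smeet S11 S21
      let j ← sjoin S12 S22
      pure (.arrow m (l ⊔ l') j)
  | _, _ => none
/-- Partial subtyping meet ⋏. -/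
def smeet : SType L → SType L → Option (SType L)
  | .bool l, .bool l' => some (.bool (l ⊓ l'))
  | .arrow S11 l S12, .arrow S21 l' S22 => do
      let j ← sjoin S11 S21
      let m ← smeet S12 S22
      pure (.arrow j (l ⊓ l') m)
  | _, _ => none
end
/-- Ascription-free λ_SEC terms. -/
inductive Tm (L : Type) where
  | var (x : String)
  | bool (b : Bool) (l : L)
  | lam (x : String) (S : SType L) (t : Tm L) (l : L)
  | app (t1 t2 : Tm L)
  | binop (op : Bool → Bool → Bool) (t1 t2 : Tm L)
  | ite (t1 t2 t3 : Tm L)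

abbrev Ctx (L : Type) := List (String × SType L)

/-- The syntax-directed λ_SEC type system. -/
inductive SD : Ctx L → Tm L → SType L → Prop where
  | var {Γ : Ctx L} {x S} : List.lookup x Γ = some S → SD Γ (.var x) S
  | bool {Γ : Ctx L} {b l} : SD Γ (.bool b l) (.bool l)
  | lam {Γ : Ctx L} {x S1 t S2 l} :
      SD ((x, S1) :: Γ) t S2 → SD Γ (.lam x S1 t l) (.arrow S1 l S2)
  | binop {Γ : Ctx L} {op t1 t2 l1 l2} :
      SD Γ t1 (.bool l1) → SD Γ t2 (.bool l2) →
      SD Γ (.binop op t1 t2) (.bool (l1 ⊔ l2))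
  | app {Γ : Ctx L} {t1 t2 S11 l S12 S2} :
      SD Γ t1 (.arrow S11 l S12) → SD Γ t2 S2 → SSub S2 S11 →
      SD Γ (.app t1 t2) (S12.stamp l)
  | ite {Γ : Ctx L} {t1 t2 t3 l S1 S2 Sj} :
      SD Γ t1 (.bool l) → SD Γ t2 S1 → SD Γ t3 S2 → sjoin S1 S2 = some Sj →
      SD Γ (.ite t1 t2 t3) (Sj.stamp l)

/-- Zdancewic's declarative type system, with subsumption. -/
inductive ZT : Ctx L → Tm L → SType L → Prop where
  | var {Γ : Ctx L} {x S} : List.lookup x Γ = some S → ZT Γ (.var x) S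
  | bool {Γ : Ctx L} {b l} : ZT Γ (.bool b l) (.bool l)
  | lam {Γ : Ctx L} {x S1 t S2 l} :
      ZT ((x, S1) :: Γ) t S2 → ZT Γ (.lam x S1 t l) (.arrow S1 l S2)
  | binop {Γ : Ctx L} {op t1 t2 l1 l2} :
      ZT Γ t1 (.bool l1) → ZT Γ t2 (.bool l2) →
      ZT Γ (.binop op t1 t2) (.bool (l1 ⊔ l2))
  | app {Γ : Ctx L} {t1 t2 S11 l S12} :
      ZT Γ t1 (.arrow S11 l S12) → ZT Γ t2 S11 →
      ZT Γ (.app t1 t2) (S12.stamp l)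
  | ite {Γ : Ctx L} {t1 t2 t3 l} {S : SType L} :
      ZT Γ t1 (.bool l) → ZT Γ t2 (S.stamp l) → ZT Γ t3 (S.stamp l) →
      ZT Γ (.ite t1 t2 t3) (S.stamp l)
  | sub {Γ : Ctx L} {t S' S} : ZT Γ t S' → SSub S' S → ZT Γ t S

theorem SSub.rfl' {L : Type} [Lattice L] (S : SType L) : SSub S S := by
  induction S with
  | bool l => exact .bool le_rfl
  | arrow S1 l S2 ih1 ih2 => exact .arrow ih1 ih2 le_rfl

/-- The induction is on the middle type, with both outer types generalized: contravariance exchanges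
their roles in the domain. -/
theorem SSub.trans' {L : Type} [Lattice L] (B : SType L) :
    ∀ A C : SType L, SSub A B → SSub B C → SSub A C := by
  induction B with
  | bool l =>
    rintro A C ⟨h⟩ ⟨h'⟩
    exact .bool (h.trans h')
  | arrow S1 l S2 ih1 ih2 =>
    intro A C hA hC
    cases hA with
    | arrow a1 a2 a3 =>
      cases hC with
      | arrow c1 c2 c3 => exact .arrow (ih1 _ _ c1 a1) (ih2 _ _ a2 c2) (a3.trans c3)

/-- Types with a common upper bound have a join below it, and types with a common lower bound have
a meet above it. -/
theorem sjoin_smeet_of_bound {L : Type} [Lattice L] (U : SType L) :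
    (∀ A B : SType L, SSub A U → SSub B U → ∃ J, sjoin A B = some J ∧ SSub J U) ∧
    (∀ A B : SType L, SSub U A → SSub U B → ∃ M, smeet A B = some M ∧ SSub U M) := by
  induction U with
  | bool l =>
    constructor
    · rintro A B ⟨h⟩ ⟨h'⟩
      exact ⟨_, by simp only [sjoin], .bool (sup_le h h')⟩
    · rintro A B ⟨h⟩ ⟨h'⟩
      exact ⟨_, by simp only [smeet], .bool (le_inf h h')⟩
  | arrow S1 l S2 ih1 ih2 =>
    constructor
    · intro A B hA hB
      cases hA with
      | arrow a1 a2 a3 =>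
        cases hB with
        | arrow b1 b2 b3 =>
          obtain ⟨M, hM, hM'⟩ := ih1.2 _ _ a1 b1
          obtain ⟨J, hJ, hJ'⟩ := ih2.1 _ _ a2 b2
          exact ⟨_, by simp [sjoin, hM, hJ], .arrow hM' hJ' (sup_le a3 b3)⟩
    · intro A B hA hB
      cases hA with
      | arrow a1 a2 a3 =>
        cases hB with
        | arrow b1 b2 b3 =>
          obtain ⟨J, hJ, hJ'⟩ := ih1.1 _ _ a1 b1
          obtain ⟨M, hM, hM'⟩ := ih2.2 _ _ a2 b2
          exact ⟨_, by simp [smeet, hM, hJ], .arrow hJ' hM' (le_inf a3 b3)⟩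

theorem sjoin_of_upper {L : Type} [Lattice L] {A B U : SType L}
    (hA : SSub A U) (hB : SSub B U) : ∃ J, sjoin A B = some J ∧ SSub J U :=
  (sjoin_smeet_of_bound U).1 A B hA hB

theorem SSub.stamp_mono {L : Type} [Lattice L] {S S' : SType L} {l l' : L}
    (h : SSub S S') (hl : l ≤ l') : SSub (S.stamp l) (S'.stamp l') := by
  cases h with
  | bool h => exact .bool (sup_le_sup h hl)
  | arrow h1 h2 h => exact .arrow h1 h2 (sup_le_sup h hl)

theorem SType.stamp_stamp_self {L : Type} [Lattice L] (S : SType L) (l : L) :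
    (S.stamp l).stamp l = S.stamp l := by
  cases S <;> simp [SType.stamp]

/-- the syntax-directed λ_SEC type system is complete with respect to
Zdancewic's declarative system: any declaratively typed term has a syntax-directed
type that is a subtype of the declarative one. -/
theorem sd_complete_wrt_Z {L : Type} [Lattice L] [BoundedOrder L]
    (Γ : Ctx L) (t : Tm L) (S : SType L) (h : ZT Γ t S) :
    ∃ S' : SType L, SSub S' S ∧ SD Γ t S' := by
  induction h with
  | var h => exact ⟨_, SSub.rfl' _, .var h⟩
  | bool => exact ⟨_, SSub.rfl' _, .bool⟩
  | lam _ ih =>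
    obtain ⟨S', hs, hd⟩ := ih
    exact ⟨_, .arrow (SSub.rfl' _) hs le_rfl, .lam hd⟩
  | binop _ _ ih1 ih2 =>
    obtain ⟨_, ⟨h1⟩, d1⟩ := ih1
    obtain ⟨_, ⟨h2⟩, d2⟩ := ih2
    exact ⟨_, .bool (sup_le_sup h1 h2), .binop d1 d2⟩
  | app _ _ ih1 ih2 =>
    obtain ⟨T1, h1, d1⟩ := ih1
    obtain ⟨T2, h2, d2⟩ := ih2
    cases h1 with
    | arrow a1 a2 a3 =>
      exact ⟨_, a2.stamp_mono a3, .app d1 d2 (SSub.trans' _ _ _ h2 a1)⟩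
  | ite _ _ _ ih1 ih2 ih3 =>
    obtain ⟨_, ⟨h1⟩, d1⟩ := ih1
    obtain ⟨T2, h2, d2⟩ := ih2
    obtain ⟨T3, h3, d3⟩ := ih3
    obtain ⟨J, hJ, hJ'⟩ := sjoin_of_upper h2 h3
    have hs := hJ'.stamp_mono h1
    rw [SType.stamp_stamp_self] at hs
    exact ⟨_, hs, .ite d1 d2 d3 hJ⟩
  | sub _ hs ih =>
    obtain ⟨T, h, d⟩ := ih
    exact ⟨T, SSub.trans' _ _ _ h hs, d⟩
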